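/- arXiv:2305.06722 — 2 statements merged into one kernel-verified Lean document; each statement's English description precedes it below -/
import Mathlib

section
/- There exists C > 0 such that for every Λ ≥ 2 and every p ∈ ℝ³: ∫_{|k|≤Λ} |k|⁴ B₀(k)² (1+|p−k|²)^{−1} dk ≤ C·log Λ. -/
open MeasureTheory
open scoped ENNReal

noncomputable section

/-- The dispersion relation `ω(k) = √(1+|k|²)` of the massive scalar field. -/
def ω (k : EuclideanSpace ℝ (Fin 3)) : ℝ := Real.sqrt (1 + ‖k‖ ^ 2)

/-- The Gross dressing form factor `B₀(k) = 1/(√(ω(k))·(|k|²+ω(k)))`. -/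
def B0 (k : EuclideanSpace ℝ (Fin 3)) : ℝ := 1 / (Real.sqrt (ω k) * (‖k‖ ^ 2 + ω k))

abbrev E3 := EuclideanSpace ℝ (Fin 3)

def gg (k : E3) : ℝ≥0∞ := ENNReal.ofReal ((ω k)⁻¹ ^ 3)

lemma one_le_om (k : E3) : 1 ≤ ω k := by
  unfold ω
  rw [Real.one_le_sqrt]
  nlinarith [sq_nonneg ‖k‖]

lemma norm_le_om (k : E3) : ‖k‖ ≤ ω k := by
  unfold ω
  apply Real.le_sqrt_of_sq_le
  linarith

lemma om_sq (k : E3) : ω k ^ 2 = 1 + ‖k‖ ^ 2 := by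
  unfold ω
  rw [Real.sq_sqrt (by positivity)]

lemma gg_meas : Measurable gg := by
  unfold gg ω
  fun_prop

lemma gg_le_one (k : E3) : gg k ≤ 1 := by
  unfold gg
  rw [ENNReal.ofReal_le_one]
  have := one_le_om k
  exact pow_le_one₀ (by positivity) (inv_le_one_of_one_le₀ this)

lemma gg_le (k : E3) (R : ℝ) (hR : 0 < R) (h : R ≤ ‖k‖) : gg k ≤ ENNReal.ofReal (R⁻¹ ^ 3) := by
  unfold gg
  have := h.trans (norm_le_om k)
  have h0 : 0 < ω k := hR.trans_le this
  gcongr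

lemma vol_ball (R : ℝ) (hR : 0 ≤ R) : volume (Metric.closedBall (0 : E3) R) =
    ENNReal.ofReal (R ^ 3) * volume (Metric.closedBall (0 : E3) 1) := by
  rw [Measure.addHaar_closedBall' volume (0 : E3) hR]
  simp

lemma tail_le (c R : ℝ) (hR : 0 < R) (hc : 0 ≤ c) :
    ∫⁻ _ in Metric.closedBall (0 : E3) (c * R), ENNReal.ofReal (R⁻¹ ^ 3) =
      ENNReal.ofReal (c ^ 3) * volume (Metric.closedBall (0 : E3) 1) := by
  rw [setLIntegral_const, vol_ball _ (by positivity), ← mul_assoc,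
    ← ENNReal.ofReal_mul (by positivity)]
  congr 2
  field_simp

lemma dyadic (n : ℕ) : ∫⁻ k in Metric.closedBall (0 : E3) (2 ^ n), gg k ≤
    ENNReal.ofReal (1 + 8 * n) * volume (Metric.closedBall (0 : E3) 1) := by
  induction n with
  | zero =>
    calc _ ≤ ∫⁻ k in Metric.closedBall (0 : E3) (2 ^ 0), 1 := lintegral_mono gg_le_one
      _ ≤ _ := by simp
  | succ n ih =>
    have hs : Metric.closedBall (0 : E3) (2 ^ (n + 1)) ⊆ Metric.closedBall (0 : E3) (2 ^ n) ∪
      (Metric.closedBall (0 : E3) (2 ^ (n + 1)) \ Metric.closedBall (0 : E3) (2 ^ n)) := by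
      intro x hx
      by_cases h : x ∈ Metric.closedBall (0 : E3) (2 ^ n)
      · exact Or.inl h
      · exact Or.inr ⟨hx, h⟩
    calc _ ≤ _ := lintegral_mono_set hs
      _ ≤ _ := lintegral_union_le _ _ _
      _ ≤ ENNReal.ofReal (1 + 8 * n) * volume (Metric.closedBall (0 : E3) 1) +
          ENNReal.ofReal (2 ^ 3) * volume (Metric.closedBall (0 : E3) 1) := by
        refine add_le_add ih ?_
        rw [← tail_le 2 (2 ^ n) (by positivity) (by norm_num), ← pow_succ']
        refine le_trans (setLIntegral_mono' (g := fun _ => ENNReal.ofReal ((2 ^ n)⁻¹ ^ 3))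
          (measurableSet_closedBall.diff measurableSet_closedBall) ?_)
          (lintegral_mono_set Set.sdiff_subset)
        intro x hx
        apply gg_le _ _ (by positivity)
        have := hx.2
        simp only [mem_closedBall_zero_iff, not_le] at this
        exact this.le
      _ = _ := by
        rw [← add_mul, ← ENNReal.ofReal_add (by positivity) (by positivity)]
        congr 2
        push_cast
        ring

lemma F_le (Λ : ℝ) (hΛ : 2 ≤ Λ) : ∫⁻ k in Metric.closedBall (0 : E3) Λ, gg k ≤
    ENNReal.ofReal (17 * Real.logb 2 Λ) * volume (Metric.closedBall (0 : E3) 1) := by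
  have hL : 1 ≤ Real.logb 2 Λ := by
    rw [Real.le_logb_iff_rpow_le (by norm_num) (by linarith)]
    simpa using hΛ
  have hn := Nat.le_ceil (Real.logb 2 Λ)
  have hn2 := Nat.ceil_lt_add_one (zero_le_one.trans hL)
  set n := ⌈Real.logb 2 Λ⌉₊
  have h1 : Λ ≤ 2 ^ n := by
    rw [Real.logb_le_iff_le_rpow (by norm_num) (by linarith)] at hn
    simpa using hn
  refine (lintegral_mono_set (Metric.closedBall_subset_closedBall h1)).trans
    ((dyadic n).trans ?_)
  gcongr
  linarith

lemma shift_le (Λ : ℝ) (hΛ : 2 ≤ Λ) (p : E3) : ∫⁻ k in Metric.closedBall (0 : E3) Λ, gg (p - k) ≤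
    (∫⁻ k in Metric.closedBall (0 : E3) Λ, gg k) + volume (Metric.closedBall (0 : E3) 1) := by
  have hp : ∀ k, gg (p - k) ≤ (Metric.closedBall (0 : E3) Λ).indicator gg (p - k) +
      ENNReal.ofReal (Λ⁻¹ ^ 3) := by
    intro k
    by_cases h : p - k ∈ Metric.closedBall (0 : E3) Λ
    · rw [Set.indicator_of_mem h]
      exact le_self_add
    · refine le_trans (gg_le _ Λ (by linarith) ?_) le_add_self
      simp only [mem_closedBall_zero_iff, not_le] at h
      exact h.le
  have ht := tail_le 1 Λ (by linarith) (by norm_num)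
  simp only [one_mul, one_pow, ENNReal.ofReal_one] at ht
  calc _ ≤ _ := lintegral_mono hp
    _ = _ := lintegral_add_right _ measurable_const
    _ ≤ _ := by
      rw [ht]
      refine add_le_add_left ?_ _
      refine (setLIntegral_le_lintegral _ _).trans ?_
      rw [lintegral_sub_left_eq_self (fun k => (Metric.closedBall (0 : E3) Λ).indicator gg k) p,
        lintegral_indicator measurableSet_closedBall]

lemma pt (p k : E3) : ENNReal.ofReal (‖k‖ ^ 4 * B0 k ^ 2 * (1 + ‖p - k‖ ^ 2)⁻¹) ≤
    gg k + gg (p - k) := by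
  unfold gg
  have ha := one_le_om k
  have hb := one_le_om (p - k)
  rw [← ENNReal.ofReal_add (by positivity) (by positivity), ← om_sq]
  apply ENNReal.ofReal_le_ofReal
  have h1 : ‖k‖ ^ 4 * B0 k ^ 2 ≤ (ω k)⁻¹ := by
    unfold B0
    have h0 : 0 ≤ ‖k‖ ^ 2 := by positivity
    rw [div_pow, mul_pow, Real.sq_sqrt (by linarith), one_pow, mul_one_div, div_le_iff₀ (by positivity),
      inv_mul_cancel_left₀ (by positivity)]
    nlinarith
  refine (mul_le_mul_of_nonneg_right h1 (by positivity)).trans ?_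
  rw [← inv_pow]
  have hx : 0 ≤ (ω k)⁻¹ := by positivity
  have hy : 0 ≤ (ω (p - k))⁻¹ := by positivity
  generalize (ω k)⁻¹ = x at *
  generalize (ω (p - k))⁻¹ = y at *
  rcases le_total x y with h | h
  · calc x * y ^ 2 ≤ y * y ^ 2 := by gcongr
      _ ≤ _ := by nlinarith [pow_nonneg hx 3]
  · calc x * y ^ 2 ≤ x * x ^ 2 := by gcongr
      _ ≤ _ := by nlinarith [pow_nonneg hy 3]

/-- There is `C > 0` such that for every `Λ ≥ 2` and every `p ∈ ℝ³`,
`∫_{|k|≤Λ} |k|⁴ B₀(k)² (1+|p−k|²)^{−1} dk ≤ C·log Λ`. -/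
theorem log_cutoff_bound :
    ∃ C > 0, ∀ Λ : ℝ, 2 ≤ Λ → ∀ p : EuclideanSpace ℝ (Fin 3),
      ∫⁻ k in {k : EuclideanSpace ℝ (Fin 3) | ‖k‖ ≤ Λ},
          ENNReal.ofReal (‖k‖ ^ 4 * B0 k ^ 2 * (1 + ‖p - k‖ ^ 2)⁻¹) ≤
        ENNReal.ofReal (C * Real.log Λ) := by
  set v := volume (Metric.closedBall (0 : E3) 1) with hv
  have hvt : v ≠ ⊤ := measure_closedBall_lt_top.ne
  have hl2 : 0 < Real.log 2 := Real.log_pos (by norm_num)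
  have hv0 : 0 < v.toReal :=
    ENNReal.toReal_pos (Metric.measure_closedBall_pos _ _ (by norm_num)).ne' hvt
  refine ⟨35 * v.toReal / Real.log 2, by positivity, fun Λ hΛ p => ?_⟩
  have hset : {k : EuclideanSpace ℝ (Fin 3) | ‖k‖ ≤ Λ} = Metric.closedBall (0 : E3) Λ := by
    ext k
    simp
  have hL : 1 ≤ Real.logb 2 Λ := by
    rw [Real.le_logb_iff_rpow_le (by norm_num) (by linarith)]
    simpa using hΛ
  have hF := F_le Λ hΛ
  rw [hset]
  calc _ ≤ _ := lintegral_mono (pt p)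
    _ = _ := lintegral_add_left gg_meas _
    _ ≤ ENNReal.ofReal (17 * Real.logb 2 Λ) * v + (ENNReal.ofReal (17 * Real.logb 2 Λ) * v
        + ENNReal.ofReal (Real.logb 2 Λ) * v) := by
      refine add_le_add hF ((shift_le Λ hΛ p).trans (add_le_add hF ?_))
      exact le_mul_of_one_le_left (by simp) (by simpa using hL)
    _ = ENNReal.ofReal (35 * Real.logb 2 Λ) * v := by
      rw [← add_mul, ← add_mul, ← ENNReal.ofReal_add (by positivity) (by positivity),
        ← ENNReal.ofReal_add (by positivity) (by positivity)]
      congr 2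
      ring
    _ = ENNReal.ofReal (35 * Real.logb 2 Λ) * ENNReal.ofReal v.toReal := by
      rw [ENNReal.ofReal_toReal hvt]
    _ ≤ _ := by
      rw [← ENNReal.ofReal_mul (by positivity)]
      apply le_of_eq
      congr 1
      unfold Real.logb
      ring

end
end

section
/- For every s ∈ (0,2) there exists C > 0 such that for every differentiable u : ℝ³ → ℂ with u, ∇u ∈ L²(ℝ³), every measurable α : ℝ³ → ℂ, and every θ ∈ [−1,1]: setting ŵ(k) = ∫_{ℝ³} e^{−ik·y}|u(y)|² dy and α^θ(k) = α(k) + θ·(2π)^{−3/2}·B₀(k)·ŵ(k), one has (∫_{ℝ³} ω(k)^{2s}|α^θ(k)|² dk)^{1/2} ≤ (∫_{ℝ³} ω(k)^{2s}|α(k)|² dk)^{1/2} + C ‖u‖_{H¹}². -/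
open MeasureTheory
open scoped ENNReal

noncomputable section

/-- The square of the `H¹`-norm, `‖u‖_{H¹}² = ‖u‖_{L²}² + ‖∇u‖_{L²}²`. -/
def H1sq (u : EuclideanSpace ℝ (Fin 3) → ℂ) : ℝ :=
  (∫ x, ‖u x‖ ^ 2) + ∫ x, ‖fderiv ℝ u x‖ ^ 2

/-- The `H¹`-norm of `u`. -/
def H1norm (u : EuclideanSpace ℝ (Fin 3) → ℂ) : ℝ := Real.sqrt (H1sq u)

/-- `ŵ(k) = ∫ e^{−ik·y}|u(y)|² dy`. -/
def what (u : EuclideanSpace ℝ (Fin 3) → ℂ) (k : EuclideanSpace ℝ (Fin 3)) : ℂ :=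
  ∫ y, Complex.exp (-(Complex.I * ((inner ℝ k y : ℝ) : ℂ))) * ((‖u y‖ ^ 2 : ℝ) : ℂ)

/-- The field component of the mean-field dressing flow,
`α^θ(k) = α(k) + θ·(2π)^{−3/2}·B₀(k)·ŵ(k)`. -/
def αθ (u α : EuclideanSpace ℝ (Fin 3) → ℂ) (θ : ℝ) (k : EuclideanSpace ℝ (Fin 3)) : ℂ :=
  α k + (θ : ℂ) * (((2 * Real.pi) ^ (-(3 : ℝ) / 2) : ℝ) : ℂ) * ((B0 k : ℝ) : ℂ) * what u k

lemma omega_ge_one (k : EuclideanSpace ℝ (Fin 3)) : 1 ≤ ω k := by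
  unfold ω
  rw [Real.one_le_sqrt]
  nlinarith [sq_nonneg ‖k‖]

lemma omega_sq (k : EuclideanSpace ℝ (Fin 3)) : ω k ^ 2 = 1 + ‖k‖ ^ 2 := by
  unfold ω
  rw [Real.sq_sqrt (by positivity)]

lemma omega_le (k : EuclideanSpace ℝ (Fin 3)) : ω k ≤ 1 + ‖k‖ := by
  unfold ω
  rw [Real.sqrt_le_left (by positivity)]
  nlinarith [norm_nonneg k]

lemma measurable_omega : Measurable ω := by
  unfold ω
  fun_prop

lemma B0_nonneg (k : EuclideanSpace ℝ (Fin 3)) : 0 ≤ B0 k := by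
  have := omega_ge_one k
  unfold B0
  positivity

lemma B0_le (k : EuclideanSpace ℝ (Fin 3)) : B0 k ≤ ω k ^ (-(5 / 2) : ℝ) := by
  have h1 := omega_ge_one k
  have h0 : 0 < ω k := by linarith
  have h2 := omega_sq k
  rw [Real.rpow_neg h0.le, ← one_div]
  unfold B0
  apply one_div_le_one_div_of_le (by positivity)
  have : ω k ^ (5 / 2 : ℝ) = Real.sqrt (ω k) * ω k ^ 2 := by
    rw [Real.sqrt_eq_rpow, ← Real.rpow_natCast, ← Real.rpow_add h0]
    norm_num
  rw [this]
  gcongr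
  linarith

lemma norm_phase (t : ℝ) : ‖Complex.exp (-(Complex.I * (t : ℂ)))‖ = 1 := by
  rw [Complex.norm_exp]
  simp

lemma norm_what_le (u : EuclideanSpace ℝ (Fin 3) → ℂ) (k : EuclideanSpace ℝ (Fin 3)) :
    ‖what u k‖ ≤ ∫ x, ‖u x‖ ^ 2 := by
  unfold what
  refine (norm_integral_le_integral_norm _).trans (le_of_eq ?_)
  congr 1
  ext y
  rw [norm_mul, norm_phase, one_mul, Complex.norm_real]
  simp

lemma norm_mul_what_le (u : EuclideanSpace ℝ (Fin 3) → ℂ) (hd : Differentiable ℝ u)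
    (hu : MemLp u 2 volume) (hdu : MemLp (fun x => fderiv ℝ u x) 2 volume)
    (k : EuclideanSpace ℝ (Fin 3)) :
    ‖k‖ * ‖what u k‖ ≤ H1sq u := by
  have i1 : Integrable (fun x => ‖u x‖ ^ 2) := hu.integrable_norm_pow (p := 2) (by norm_num)
  have i2 : Integrable (fun x => ‖fderiv ℝ u x‖ ^ 2) :=
    hdu.integrable_norm_pow (p := 2) (by norm_num)
  set w : EuclideanSpace ℝ (Fin 3) → ℂ := fun y => ((‖u y‖ ^ 2 : ℝ) : ℂ) with hw
  set e : EuclideanSpace ℝ (Fin 3) → ℂ :=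
    fun y => Complex.exp (-(Complex.I * ((inner ℝ k y : ℝ) : ℂ))) with he
  have hwd : ∀ y, HasFDerivAt w
      (Complex.ofRealCLM.comp (2 • (innerSL ℝ (u y)).comp (fderiv ℝ u y))) y := fun y =>
    Complex.ofRealCLM.hasFDerivAt.comp y ((hd y).hasFDerivAt.norm_sq)
  have hed : ∀ y, HasFDerivAt e
      (e y • (-(Complex.I • (Complex.ofRealCLM.comp (innerSL ℝ k))))) y := by
    intro y
    have h1 : HasFDerivAt (fun y => ((inner ℝ k y : ℝ) : ℂ))
        (Complex.ofRealCLM.comp (innerSL ℝ k)) y :=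
      (Complex.ofRealCLM.comp (innerSL ℝ k)).hasFDerivAt
    exact ((h1.const_mul Complex.I).neg).cexp
  have hew : ∀ y, ‖e y‖ = 1 := fun y => norm_phase _
  have hfe : ∀ y, fderiv ℝ e y k = -(Complex.I * (‖k‖ ^ 2 : ℝ)) * e y := by
    intro y
    rw [(hed y).fderiv]
    simp
    ring
  have hfw : ∀ y, ‖fderiv ℝ w y k‖ ≤ ‖k‖ * (‖u y‖ ^ 2 + ‖fderiv ℝ u y‖ ^ 2) := by
    intro y
    rw [(hwd y).fderiv]
    have h1 : ‖inner ℝ (u y) (fderiv ℝ u y k)‖ ≤ ‖u y‖ * (‖fderiv ℝ u y‖ * ‖k‖) :=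
      (norm_inner_le_norm _ _).trans (by gcongr; exact (fderiv ℝ u y).le_opNorm k)
    have h2 : ‖(Complex.ofRealCLM.comp (2 • (innerSL ℝ (u y)).comp (fderiv ℝ u y))) k‖
        = 2 * ‖inner ℝ (u y) (fderiv ℝ u y k)‖ := by
      simp [-Complex.inner]
    rw [h2]
    nlinarith [mul_nonneg (norm_nonneg k) (sq_nonneg (‖u y‖ - ‖fderiv ℝ u y‖))]
  have hec : Continuous e := by
    rw [he]; fun_prop
  have hwc : Continuous w := by
    have := hd.continuous
    rw [hw]; fun_prop
  have iw : Integrable (fun y => e y * w y) := by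
    refine i1.mono' (hec.mul hwc).aestronglyMeasurable (Filter.Eventually.of_forall fun y => ?_)
    rw [norm_mul, hew, one_mul, hw]
    simp
  have ibd : Integrable (fun y => ‖k‖ * (‖u y‖ ^ 2 + ‖fderiv ℝ u y‖ ^ 2)) :=
    (i1.add i2).const_mul _
  have bnd : ∀ y, ‖e y * fderiv ℝ w y k‖ ≤ ‖k‖ * (‖u y‖ ^ 2 + ‖fderiv ℝ u y‖ ^ 2) := by
    intro y
    rw [norm_mul, hew, one_mul]
    exact hfw y
  have key := integral_mul_fderiv_eq_neg_fderiv_mul_of_integrable (μ := volume) (𝕜 := ℂ)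
    (f := e) (g := w) (v := k)
    (by
      refine (iw.const_mul (-(Complex.I * (‖k‖ ^ 2 : ℝ)))).congr
        (Filter.Eventually.of_forall fun y => ?_)
      simp only [hfe]
      ring)
    (by
      refine ibd.mono' ?_ (Filter.Eventually.of_forall bnd)
      exact hec.aestronglyMeasurable.mul
        (measurable_fderiv_apply_const ℝ w k).aestronglyMeasurable)
    iw (fun y _ => (hed y).differentiableAt) (fun y _ => (hwd y).differentiableAt)
  have h3 : ∫ y, fderiv ℝ e y k * w y = -(Complex.I * (‖k‖ ^ 2 : ℝ)) * what u k := by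
    simp only [hfe, mul_assoc]
    rw [integral_const_mul]
    rw [what]
  rw [h3] at key
  have h4 : ‖k‖ ^ 2 * ‖what u k‖ ≤ ‖k‖ * H1sq u := by
    calc ‖k‖ ^ 2 * ‖what u k‖ = ‖∫ y, e y * fderiv ℝ w y k‖ := by
          rw [key]; simp
      _ ≤ ∫ y, ‖k‖ * (‖u y‖ ^ 2 + ‖fderiv ℝ u y‖ ^ 2) :=
          norm_integral_le_of_norm_le ibd (Filter.Eventually.of_forall bnd)
      _ = ‖k‖ * H1sq u := by
          rw [integral_const_mul, integral_add i1 i2, H1sq]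
  rcases (norm_nonneg k).eq_or_lt with h0 | h0
  · rw [← h0, zero_mul, H1sq]
    positivity
  · refine le_of_mul_le_mul_left ?_ h0
    linarith

lemma H1sq_nonneg (u : EuclideanSpace ℝ (Fin 3) → ℂ) : 0 ≤ H1sq u := by
  unfold H1sq
  positivity

lemma what_le (u : EuclideanSpace ℝ (Fin 3) → ℂ) (hd : Differentiable ℝ u)
    (hu : MemLp u 2 volume) (hdu : MemLp (fun x => fderiv ℝ u x) 2 volume)
    (k : EuclideanSpace ℝ (Fin 3)) :
    ‖what u k‖ ≤ 2 * H1sq u * ω k ^ (-1 : ℝ) := by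
  have h0 : 0 < ω k := by linarith [omega_ge_one k]
  rw [Real.rpow_neg_one, ← div_eq_mul_inv, le_div_iff₀ h0]
  have h1 : ‖what u k‖ ≤ H1sq u := by
    refine (norm_what_le u k).trans ?_
    have : 0 ≤ ∫ x, ‖fderiv ℝ u x‖ ^ 2 := by positivity
    rw [H1sq]
    linarith
  have h2 := norm_mul_what_le u hd hu hdu k
  have h3 := mul_le_mul_of_nonneg_left (omega_le k) (norm_nonneg (what u k))
  linarith

lemma alpha_le (u α : EuclideanSpace ℝ (Fin 3) → ℂ) (hd : Differentiable ℝ u)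
    (hu : MemLp u 2 volume) (hdu : MemLp (fun x => fderiv ℝ u x) 2 volume)
    (θ : ℝ) (hθ : θ ∈ Set.Icc (-1 : ℝ) 1) (k : EuclideanSpace ℝ (Fin 3)) :
    ‖αθ u α θ k‖ ≤ ‖α k‖ + 2 * H1sq u * ω k ^ (-(7 / 2) : ℝ) := by
  have h0 : 0 < ω k := by linarith [omega_ge_one k]
  unfold αθ
  refine (norm_add_le _ _).trans ?_
  gcongr
  rw [norm_mul, norm_mul, norm_mul, Complex.norm_real, Complex.norm_real, Complex.norm_real]
  have h1 : ‖θ‖ ≤ 1 := abs_le.2 hθ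
  have h2 : ‖(2 * Real.pi) ^ (-(3 : ℝ) / 2)‖ ≤ 1 := by
    rw [Real.norm_of_nonneg (by positivity)]
    exact Real.rpow_le_one_of_one_le_of_nonpos (by linarith [Real.pi_gt_three]) (by norm_num)
  have h3 : ‖B0 k‖ ≤ ω k ^ (-(5 / 2) : ℝ) := by
    rw [Real.norm_of_nonneg (B0_nonneg k)]
    exact B0_le k
  calc _ ≤ 1 * 1 * ω k ^ (-(5 / 2) : ℝ) * (2 * H1sq u * ω k ^ (-1 : ℝ)) := by
        gcongr
        exact what_le u hd hu hdu k
    _ = 2 * H1sq u * (ω k ^ (-(5 / 2) : ℝ) * ω k ^ (-1 : ℝ)) := by ring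
    _ = _ := by
        rw [← Real.rpow_add h0]
        norm_num

lemma integrable_omega (s : ℝ) (hs2 : s < 2) :
    Integrable (fun k => ω k ^ (2 * s - 7)) := by
  have := integrable_rpow_neg_one_add_norm_sq (E := EuclideanSpace ℝ (Fin 3)) (μ := volume)
    (r := 7 - 2 * s) (by simp; linarith)
  refine this.congr (Filter.Eventually.of_forall fun k => ?_)
  simp only [ω]
  rw [Real.sqrt_eq_rpow, ← Real.rpow_mul (by positivity)]
  congr 1
  ring

/-- For every `s ∈ (0,2)` there is `C > 0` such that for every differentiable `u` with
`u, ∇u ∈ L²`, every measurable `α`, and every `θ ∈ [−1,1]`: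
`‖α^θ‖_{h_s} ≤ ‖α‖_{h_s} + C‖u‖_{H¹}²`. -/
theorem dressing_flow_preserves_hs (s : ℝ) (hs0 : 0 < s) (hs2 : s < 2) :
    ∃ C > 0, ∀ (u α : EuclideanSpace ℝ (Fin 3) → ℂ),
      Differentiable ℝ u → MemLp u 2 volume →
      MemLp (fun x => fderiv ℝ u x) 2 volume →
      Measurable α →
      ∀ θ : ℝ, θ ∈ Set.Icc (-1 : ℝ) 1 →
        (∫⁻ k, ENNReal.ofReal (ω k ^ (2 * s) * ‖αθ u α θ k‖ ^ 2))
            ^ (1 / 2 : ℝ) ≤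
          (∫⁻ k, ENNReal.ofReal (ω k ^ (2 * s) * ‖α k‖ ^ 2)) ^ (1 / 2 : ℝ) +
            ENNReal.ofReal (C * H1norm u ^ 2) := by
  refine ⟨2 * (Real.sqrt (∫ k, ω k ^ (2 * s - 7))) + 1, by positivity, ?_⟩
  intro u α hd hu hdu hα θ hθ
  have hH := H1sq_nonneg u
  have hpos : ∀ k, 0 < ω k := fun k => by linarith [omega_ge_one k]
  have hsq : ∀ k, (ω k ^ s) ^ 2 = ω k ^ (2 * s) := by
    intro k
    rw [← Real.rpow_natCast, ← Real.rpow_mul (hpos k).le]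
    congr 1
    push_cast
    ring
  have hm := measurable_omega
  set F : EuclideanSpace ℝ (Fin 3) → ℝ≥0∞ := fun k => ENNReal.ofReal (ω k ^ s * ‖α k‖) with hF
  set G : EuclideanSpace ℝ (Fin 3) → ℝ≥0∞ :=
    fun k => ENNReal.ofReal (2 * H1sq u * ω k ^ (s - 7 / 2)) with hG
  have mF : Measurable F := by rw [hF]; fun_prop
  have mG : Measurable G := by rw [hG]; fun_prop
  have mink := ENNReal.lintegral_Lp_add_le (μ := volume) mF.aemeasurable mG.aemeasurable
    (p := 2) (by norm_num)
  have hFi : ∀ k, F k ^ (2 : ℝ) = ENNReal.ofReal (ω k ^ (2 * s) * ‖α k‖ ^ 2) := by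
    intro k
    have := hpos k
    rw [hF]
    simp only
    rw [ENNReal.rpow_two, ← ENNReal.ofReal_pow (by positivity), mul_pow, hsq]
  have hGi : ∀ k, G k ^ (2 : ℝ) = ENNReal.ofReal ((2 * H1sq u) ^ 2 * ω k ^ (2 * s - 7)) := by
    intro k
    have := hpos k
    rw [hG]
    simp only
    rw [ENNReal.rpow_two, ← ENNReal.ofReal_pow (by positivity), mul_pow, ← Real.rpow_natCast (ω k ^ _),
      ← Real.rpow_mul (hpos k).le]
    congr 3
    push_cast
    ring
  have hGint : (∫⁻ k, G k ^ (2 : ℝ)) ^ (1 / 2 : ℝ) =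
      ENNReal.ofReal (2 * H1sq u * Real.sqrt (∫ k, ω k ^ (2 * s - 7))) := by
    have hnn : 0 ≤ ∫ k, ω k ^ (2 * s - 7) :=
      integral_nonneg fun k => Real.rpow_nonneg (hpos k).le _
    simp only [hGi]
    rw [← ofReal_integral_eq_lintegral_ofReal ((integrable_omega s hs2).const_mul _)
      (Filter.Eventually.of_forall fun k =>
        mul_nonneg (sq_nonneg _) (Real.rpow_nonneg (hpos k).le _)),
      integral_const_mul, ENNReal.ofReal_rpow_of_nonneg (by positivity) (by norm_num),
      ← Real.sqrt_eq_rpow, Real.sqrt_mul (by positivity), Real.sqrt_sq (by positivity)]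
  have hle : ∀ k, ENNReal.ofReal (ω k ^ (2 * s) * ‖αθ u α θ k‖ ^ 2) ≤ (F + G) k ^ (2 : ℝ) := by
    intro k
    have := hpos k
    rw [Pi.add_apply, hF, hG]
    simp only
    rw [← ENNReal.ofReal_add (by positivity) (by positivity), ENNReal.rpow_two,
      ← ENNReal.ofReal_pow (by positivity), ← hsq, ← mul_pow]
    apply ENNReal.ofReal_le_ofReal
    gcongr
    have h1 := mul_le_mul_of_nonneg_left (alpha_le u α hd hu hdu θ hθ k)
      (Real.rpow_nonneg (hpos k).le s)
    refine h1.trans (le_of_eq ?_)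
    rw [sub_eq_add_neg, Real.rpow_add (hpos k)]
    ring
  calc _ ≤ (∫⁻ k, (F + G) k ^ (2 : ℝ)) ^ (1 / 2 : ℝ) := by
        gcongr with k
        exact hle k
    _ ≤ _ := mink
    _ ≤ _ := by
        rw [hGint]
        simp only [hFi]
        refine add_le_add le_rfl (ENNReal.ofReal_le_ofReal ?_)
        rw [H1norm, Real.sq_sqrt hH]
        nlinarith

end
end
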